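/- Let T > 0, t ∈ [0,T), let f̃ : ℝ → ℝ be bounded and measurable, let ω : [0,T] → ℝ be such that s ↦ f̃(ω(s)) is integrable on [0,t], and let u : [0,T] → ℝ be measurable, integrable on [0,T−t], and continuous at the point T−t (with u(s) standing for the transition-semigroup value T_s f̃(ω(t)) = ∫ f̃(y) κ_s(ω(t),dy)). Define, for t' ∈ [t,T], G(t') := ∫_0^{T−t'} u(s) ds + ∫_0^{t'} f̃( ω^t(s) ) ds, where ω^t is the path ω stopped at t. Then the right derivative of G at t exists and equals lim_{h↓0} (G(t+h) − G(t))/h = f̃(ω(t)) − u(T−t); i.e. the horizontal derivative of the valuation functional is 𝒟G_f(t,ω) = f̃(ω(t)) − T_{T−t} f̃(ω(t)). -/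

import Mathlib

/-! The fundamental theorem of calculus, applied at the continuity point `T - t` of `u`, shows that
`h ↦ ∫_0^{T-(t+h)} u` has derivative `-u (T - t)` at `0`. The stopped path is constant after `t`, so
the other integral grows by exactly `h * ftil (ω t)` between `t` and `t + h`. -/


open Filter Topology MeasureTheory

/-- Horizontal derivative of the Markov valuation functional: with
`G(t') = ∫_0^{T−t'} u(s) ds + ∫_0^{t'} f̃(ω^t(s)) ds` on `[t,T]`, where `u` is integrable on
`[0,T−t]` and continuous at `T−t`, the right derivative of `G` at `t` exists and equals
`f̃(ω(t)) − u(T−t)`, i.e. `𝒟G_f(t,ω) = f̃(ω(t)) − T_{T−t}f̃(ω(t))`. -/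
theorem markov_valuation_horizontal_derivative
    (T t : ℝ) (hT : 0 < T) (ht : t ∈ Set.Ico (0:ℝ) T)
    (ftil : ℝ → ℝ) (hfm : Measurable ftil) (hfb : ∃ C, ∀ x, |ftil x| ≤ C)
    (ω : ℝ → ℝ)
    (hωint : IntervalIntegrable (fun s => ftil (ω s)) MeasureTheory.volume 0 t)
    (u : ℝ → ℝ) (hum : Measurable u)
    (huint : IntervalIntegrable u MeasureTheory.volume 0 (T - t))
    (hucont : ContinuousAt u (T - t))
    (G : ℝ → ℝ)
    (hG : ∀ t' ∈ Set.Icc t T,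
      G t' = (∫ s in (0:ℝ)..(T - t'), u s) + ∫ s in (0:ℝ)..t', ftil (ω (min s t))) :
    Tendsto (fun h => (G (t + h) - G t) / h) (nhdsWithin 0 (Set.Ioi 0))
      (nhds (ftil (ω t) - u (T - t))) := by
  obtain ⟨ht0, htT⟩ := ht
  have hU : HasDerivAt (fun x => ∫ s in (0:ℝ)..x, u s) (u (T - t)) (T - t) :=
    intervalIntegral.integral_hasDerivAt_right huint
      hum.stronglyMeasurable.stronglyMeasurableAtFilter hucont
  have hV : HasDerivAt (fun x => ∫ s in (0:ℝ)..(T - x), u s) (-u (T - t)) t := by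
    simpa using hU.comp_const_sub T t
  have hlim := hV.tendsto_slope_zero_right.const_add (ftil (ω t))
  rw [← sub_eq_add_neg] at hlim
  refine hlim.congr' ?_
  have hmem : Set.Ioo (0:ℝ) (T - t) ∈ 𝓝[>] (0:ℝ) := Ioo_mem_nhdsGT (by linarith)
  filter_upwards [hmem] with h hh
  obtain ⟨h0, hhT⟩ := hh
  have hbefore : IntervalIntegrable (fun s => ftil (ω (min s t))) volume 0 t := by
    refine hωint.congr fun s hs => ?_
    rw [Set.uIoc_of_le ht0] at hs
    simp [min_eq_left hs.2]
  have hconst : Set.EqOn (fun _ => ftil (ω t)) (fun s => ftil (ω (min s t)))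
      (Set.uIcc t (t + h)) := fun s hs => by
    rw [Set.uIcc_of_le (by linarith)] at hs
    simp [min_eq_right hs.1]
  have hafter : IntervalIntegrable (fun s => ftil (ω (min s t))) volume t (t + h) :=
    intervalIntegrable_const.congr (hconst.mono Set.uIoc_subset_uIcc)
  have hsplit := intervalIntegral.integral_add_adjacent_intervals hbefore hafter
  rw [← intervalIntegral.integral_congr hconst, intervalIntegral.integral_const,
    add_sub_cancel_left, smul_eq_mul] at hsplit
  rw [hG (t + h) ⟨by linarith, by linarith⟩, hG t ⟨le_rfl, htT.le⟩, ← hsplit, smul_eq_mul]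
  field_simp
  ring
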